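/- arXiv:2508.13809 — 2 statements merged into one kernel-verified Lean document; each statement's English description precedes it below -/
import Mathlib

section
/- Let p be a prime, k > 2 an integer, and L ⊆ Z/pZ with 0 ∉ L and L = −L (i.e., x ∈ L iff −x ∈ L). Suppose p divides n. Let A_1, …, A_m be pairwise distinct subsets of [n] with m ≥ k such that: for every j with 1 ≤ j ≤ k−1 and all indices 1 ≤ r_1 < ⋯ < r_j ≤ m, |A_{r_1} ∩ ⋯ ∩ A_{r_j}| ≡ 0 (mod p); and for all indices 1 ≤ r_1 < ⋯ < r_k ≤ m, |A_{r_1} ∩ ⋯ ∩ A_{r_k}| mod p ∈ L. Then m ≤ ∑_{i=0}^{|L|} C(⌊n/2^{k−2}⌋ − 2, i) + (k − 2), where C(a,b) denotes the binomial coefficient and ⌊·⌋ denotes the floor (with the convention that a − 2 is truncated natural subtraction when a < 2). -/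
open Finset

/-- The span of the functions `i ↦ ∏ x ∈ S, w i x`, where `S` runs over the subsets of `T` with at
most `d` elements. -/
def lowDegreeSpan {F ι α : Type*} [Field F] (w : ι → α → F) (T : Finset α) (d : ℕ) :
    Submodule F (ι → F) :=
  Submodule.span F ((fun S : Finset α => fun i => ∏ x ∈ S, w i x) '' {S | S ⊆ T ∧ #S ≤ d})

lemma finrank_lowDegreeSpan_le {F ι α : Type*} [Field F] (w : ι → α → F)
    (T : Finset α) (d : ℕ) :
    Module.finrank F (lowDegreeSpan w T d) ≤ ∑ i ∈ range (d + 1), (#T).choose i := by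
  classical
  let U : Finset (Finset α) := (range (d + 1)).biUnion fun i => T.powersetCard i
  have hU : {S | S ⊆ T ∧ #S ≤ d} = (U : Set (Finset α)) := by
    ext S
    simp [U, mem_powersetCard, and_comm]
  rw [lowDegreeSpan, hU, ← coe_image]
  calc _ ≤ #(U.image fun S : Finset α => fun i => ∏ x ∈ S, w i x) := finrank_span_finset_le_card _
    _ ≤ #U := card_image_le
    _ ≤ ∑ i ∈ range (d + 1), #(T.powersetCard i) := card_biUnion_le
    _ = _ := by simp

lemma lowDegreeSpan_mono {F ι α : Type*} [Field F] (w : ι → α → F) (T : Finset α)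
    {d e : ℕ} (h : d ≤ e) : lowDegreeSpan w T d ≤ lowDegreeSpan w T e :=
  Submodule.span_mono (Set.image_mono fun _ hS => ⟨hS.1, hS.2.trans h⟩)

/-- Multiplying by a coordinate raises the degree by at most one, because the coordinates are
idempotent. -/
lemma mul_coord_mem_lowDegreeSpan {F ι α : Type*} [Field F] {w : ι → α → F}
    (hw : ∀ i x, w i x * w i x = w i x) {T : Finset α} {d : ℕ} {g : ι → F}
    (hg : g ∈ lowDegreeSpan w T d) {x : α} (hx : x ∈ T) :
    (fun i => w i x * g i) ∈ lowDegreeSpan w T (d + 1) := by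
  classical
  induction hg using Submodule.span_induction with
  | mem g hg =>
    obtain ⟨S, ⟨hST, hS⟩, rfl⟩ := hg
    refine Submodule.subset_span
      ⟨insert x S, ⟨insert_subset hx hST, (card_insert_le _ _).trans (by omega)⟩, ?_⟩
    funext i
    by_cases hxS : x ∈ S
    · simp only [insert_eq_of_mem hxS]
      rw [← mul_prod_erase _ _ hxS, ← mul_assoc, hw]
    · exact prod_insert hxS
  | zero =>
    convert Submodule.zero_mem (lowDegreeSpan w T (d + 1)) using 1
    funext i
    simp
  | add g h _ _ hg hh =>
    convert Submodule.add_mem _ hg hh using 1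
    funext i
    simp [mul_add]
  | smul c g _ hg =>
    convert Submodule.smul_mem _ c hg using 1
    funext i
    simp [mul_left_comm]

lemma prod_affine_mem_lowDegreeSpan {F ι α : Type*} [Field F] {w : ι → α → F}
    (hw : ∀ i x, w i x * w i x = w i x) {T : Finset α} (c : α → F) (L : Finset F) :
    (fun i => ∏ l ∈ L, (∑ x ∈ T, w i x * c x - l)) ∈ lowDegreeSpan w T #L := by
  classical
  induction L using Finset.induction_on with
  | empty => exact Submodule.subset_span ⟨∅, by simp, by simp⟩
  | insert l L hl ih =>
    rw [card_insert_of_notMem hl]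
    set g : ι → F := fun i => ∏ l ∈ L, (∑ x ∈ T, w i x * c x - l) with hg
    have key : (∑ x ∈ T, c x • fun i => w i x * g i) - l • g ∈ lowDegreeSpan w T (#L + 1) :=
      Submodule.sub_mem _
        (Submodule.sum_mem _ fun x hx =>
          Submodule.smul_mem _ _ (mul_coord_mem_lowDegreeSpan hw ih hx))
        (Submodule.smul_mem _ _ (lowDegreeSpan_mono w T (Nat.le_succ _) ih))
    convert key using 1
    funext i
    rw [prod_insert hl]
    simp only [Pi.sub_apply, Finset.sum_apply, Pi.smul_apply, smul_eq_mul, sub_mul, sum_mul, hg]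
    congr 1
    exact sum_congr rfl fun x _ => by ring

lemma card_le_finrank_of_diagonal {F ι : Type*} [Field F] [Fintype ι] (V : Submodule F (ι → F))
    (f : ι → ι → F) (hf : ∀ j, f j ∈ V) (hdiag : ∀ j, f j j ≠ 0)
    (hoff : ∀ i j, i ≠ j → f j i = 0) : Fintype.card ι ≤ Module.finrank F V := by
  classical
  have hV : V = ⊤ := by
    rw [eq_top_iff, ← (Pi.basisFun F ι).span_eq, Submodule.span_le]
    rintro _ ⟨j, rfl⟩
    have : Pi.basisFun F ι j = (f j j)⁻¹ • f j := by
      funext i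
      by_cases h : i = j
      · subst h; simp [hdiag]
      · simp [h, hoff i j h]
    rw [this]
    exact V.smul_mem _ (hf j)
  rw [hV, finrank_top, Module.finrank_fintype_fun_eq_card]

/-- A bound on the number of vectors with idempotent coordinates in `X` that have zero coordinate
sum (hence are isotropic), vanish at a common point, and have pairwise inner products in a set `L`
not containing zero. -/
lemma card_le_of_isotropic_of_inner_mem {F ι α : Type*} [Field F] [Fintype ι]
    {w : ι → α → F} (hw : ∀ i x, w i x * w i x = w i x) {X : Finset α} (hX : 2 ≤ #X)
    {a : α} (ha : a ∈ X) (hwa : ∀ i, w i a = 0) {L : Finset F} (h0 : (0 : F) ∉ L)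
    (hsum : ∀ i, ∑ x ∈ X, w i x = 0)
    (hL : ∀ i j, i ≠ j → ∑ x ∈ X, w i x * w j x ∈ L) :
    Fintype.card ι ≤ ∑ i ∈ range (#L + 1), (#X - 2).choose i := by
  classical
  obtain ⟨b, hb⟩ : (X.erase a).Nonempty := by
    rw [← card_pos, card_erase_of_mem ha]; omega
  set T := (X.erase a).erase b with hT
  have hTcard : #T = #X - 2 := by
    rw [hT, card_erase_of_mem hb, card_erase_of_mem ha]; omega
  have split : ∀ u : α → F, ∑ x ∈ X, u x = u a + (u b + ∑ x ∈ T, u x) := fun u => by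
    rw [hT, add_sum_erase _ _ hb, add_sum_erase _ _ ha]
  have inner_eq : ∀ i j, ∑ x ∈ T, w i x * (w j x - w j b) = ∑ x ∈ X, w i x * w j x := by
    intro i j
    have h := hsum i
    rw [split, hwa, zero_add] at h
    rw [split, hwa, zero_mul, zero_add]
    simp only [mul_sub, sum_sub_distrib, ← sum_mul]
    linear_combination -w j b * h
  rw [← hTcard]
  refine (card_le_finrank_of_diagonal (lowDegreeSpan w T #L)
    (fun j i => ∏ l ∈ L, (∑ x ∈ T, w i x * (w j x - w j b) - l))
    (fun j => prod_affine_mem_lowDegreeSpan hw _ L) (fun j => ?_) fun i j hij => ?_).trans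
    (finrank_lowDegreeSpan_le w T #L)
  · rw [prod_ne_zero_iff]
    intro l hl
    rw [inner_eq]
    simp only [hw, hsum, zero_sub, neg_ne_zero]
    exact fun h => h0 (h ▸ hl)
  · exact prod_eq_zero (hL i j hij) (by rw [inner_eq, sub_self])

/-- The elements of `X` lying in `A i` for every `i ∈ S`. -/
def commonPart {ι α : Type*} [DecidableEq α] (A : ι → Finset α) (X : Finset α) (S : Finset ι) :
    Finset α :=
  {x ∈ X | ∀ i ∈ S, x ∈ A i}

lemma card_le_of_pairwise {p : ℕ} [Fact p.Prime] {ι α : Type*} [DecidableEq α] {L : Finset (ZMod p)}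
    (h0 : (0 : ZMod p) ∉ L) (hsym : ∀ x : ZMod p, x ∈ L ↔ -x ∈ L) (A : ι → Finset α)
    (X : Finset α) (I : Finset ι) (hI : 2 ≤ #I)
    (hlow : ∀ S ⊆ I, #S < 2 → (#(commonPart A X S) : ZMod p) = 0)
    (htop : ∀ S ⊆ I, #S = 2 → (#(commonPart A X S) : ZMod p) ∈ L) :
    #I ≤ ∑ i ∈ range (#L + 1), (#X - 2).choose i := by
  classical
  have hXcard : (#X : ZMod p) = 0 := by simpa [commonPart] using hlow ∅ (by simp) (by simp)
  have hXne : X.Nonempty := by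
    rw [nonempty_iff_ne_empty]
    rintro rfl
    obtain ⟨S, hSI, hS⟩ := exists_subset_card_eq hI
    exact h0 (by simpa [commonPart] using htop S hSI hS)
  have hX2 : 2 ≤ #X :=
    (Fact.out : p.Prime).two_le.trans
      (Nat.le_of_dvd hXne.card_pos ((ZMod.natCast_eq_zero_iff _ _).1 hXcard))
  obtain ⟨a, ha⟩ := hXne
  let v : I → α → ZMod p := fun i x => if x ∈ A i then 1 else 0
  have hv : ∀ i x, v i x * v i x = v i x := fun i x => by simp [v]
  have hvsum : ∀ i, ∑ x ∈ X, v i x = 0 := fun i => by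
    simpa [commonPart, v, filter_mem_eq_inter] using hlow {i.1} (by simp) (by simp)
  have hvL : ∀ i j, i ≠ j → ∑ x ∈ X, v i x * v j x ∈ L := fun i j hij => by
    have := htop {i.1, j.1} (by simp [insert_subset_iff])
      (card_pair fun h => hij (Subtype.ext h))
    simpa [commonPart, v, ← ite_and, and_comm] using this
  -- Replace a set by its complement whenever it contains `a`.
  let w : I → α → ZMod p := fun i x => v i a + (1 - 2 * v i a) * v i x
  have hε : ∀ i, 1 - 2 * v i a = 1 ∨ 1 - 2 * v i a = -1 := fun i => by
    by_cases h : a ∈ A i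
    · right; simp only [v, h, if_true]; ring
    · left; simp [v, h]
  rw [← Fintype.card_coe I]
  refine card_le_of_isotropic_of_inner_mem (w := w) (fun i x => ?_) hX2 ha (fun i => ?_) h0
    (fun i => ?_) fun i j hij => ?_
  · simp only [w]
    linear_combination (1 - 2 * v i a) ^ 2 * hv i x + hv i a
  · simp only [w]
    linear_combination -2 * hv i a
  · simp only [w, sum_add_distrib, ← mul_sum, hvsum, sum_const, nsmul_eq_mul, hXcard]
    ring
  · have : ∑ x ∈ X, w i x * w j x =
        (1 - 2 * v i a) * (1 - 2 * v j a) * ∑ x ∈ X, v i x * v j x := by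
      have expand : ∀ x, w i x * w j x = v i a * v j a + v i a * (1 - 2 * v j a) * v j x +
          v j a * (1 - 2 * v i a) * v i x +
          (1 - 2 * v i a) * (1 - 2 * v j a) * (v i x * v j x) := fun x => by
        simp only [w]; ring
      simp only [expand, sum_add_distrib, ← mul_sum, hvsum, sum_const, nsmul_eq_mul, hXcard]
      ring
    rw [this]
    have hmem := hvL i j hij
    rcases hε i with hi | hi <;> rcases hε j with hj | hj <;> rw [hi, hj] <;>
      simpa [← hsym] using hmem

lemma commonPart_filter_mem {ι α : Type*} [DecidableEq α] [DecidableEq ι] (A : ι → Finset α)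
    (X : Finset α) (a : ι) (S : Finset ι) :
    commonPart A {x ∈ X | x ∈ A a} S = commonPart A X (insert a S) := by
  ext x
  simp [commonPart, and_assoc]

lemma card_commonPart_filter_notMem {ι α : Type*} [DecidableEq α] [DecidableEq ι]
    (A : ι → Finset α) (X : Finset α) (a : ι) (S : Finset ι) :
    #(commonPart A X (insert a S)) + #(commonPart A {x ∈ X | x ∉ A a} S) =
      #(commonPart A X S) := by
  rw [← card_filter_add_card_filter_not (s := commonPart A X S) (fun x => x ∈ A a)]
  congr 2 <;> ext x <;> simp [commonPart] <;> tauto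

lemma card_le_of_commonPart {p : ℕ} [Fact p.Prime] {ι α : Type*} [DecidableEq α]
    {L : Finset (ZMod p)} (h0 : (0 : ZMod p) ∉ L) (hsym : ∀ x : ZMod p, x ∈ L ↔ -x ∈ L)
    (A : ι → Finset α) (t : ℕ) (X : Finset α) (I : Finset ι) (hI : t + 2 ≤ #I)
    (hlow : ∀ S ⊆ I, #S < t + 2 → (#(commonPart A X S) : ZMod p) = 0)
    (htop : ∀ S ⊆ I, #S = t + 2 → (#(commonPart A X S) : ZMod p) ∈ L) :
    #I ≤ ∑ i ∈ range (#L + 1), (#X / 2 ^ t - 2).choose i + t := by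
  classical
  induction t generalizing X I with
  | zero => simpa using card_le_of_pairwise h0 hsym A X I hI hlow htop
  | succ t ih =>
    obtain ⟨a, ha⟩ : I.Nonempty := card_pos.1 (by omega)
    have hIcard : #(I.erase a) + 1 = #I := card_erase_add_one ha
    have hins : ∀ S ⊆ I.erase a, insert a S ⊆ I ∧ #(insert a S) = #S + 1 := fun S hS =>
      ⟨insert_subset ha (hS.trans (erase_subset _ _)),
        card_insert_of_notMem fun h => notMem_erase a I (hS h)⟩
    obtain ⟨Y, hY, hYlow, hYtop⟩ : ∃ Y : Finset α, #Y ≤ #X / 2 ∧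
        (∀ S ⊆ I.erase a, #S < t + 2 → (#(commonPart A Y S) : ZMod p) = 0) ∧
        (∀ S ⊆ I.erase a, #S = t + 2 → (#(commonPart A Y S) : ZMod p) ∈ L) := by
      have hsplit := card_filter_add_card_filter_not (s := X) (fun x => x ∈ A a)
      rcases le_total #{x ∈ X | x ∈ A a} #{x ∈ X | x ∉ A a} with h | h
      · refine ⟨{x ∈ X | x ∈ A a}, by omega, fun S hS hc => ?_, fun S hS hc => ?_⟩ <;>
          rw [commonPart_filter_mem]
        · exact hlow _ (hins S hS).1 (by rw [(hins S hS).2]; omega)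
        · exact htop _ (hins S hS).1 (by rw [(hins S hS).2]; omega)
      · have hneg : ∀ S ⊆ I.erase a, #S ≤ t + 2 →
            (#(commonPart A {x ∈ X | x ∉ A a} S) : ZMod p) =
              -(#(commonPart A X (insert a S)) : ZMod p) := fun S hS hc => by
          have hzero := hlow S (hS.trans (erase_subset _ _)) (by omega)
          rw [← card_commonPart_filter_notMem A X a S, Nat.cast_add] at hzero
          exact eq_neg_of_add_eq_zero_right hzero
        refine ⟨{x ∈ X | x ∉ A a}, by omega, fun S hS hc => ?_, fun S hS hc => ?_⟩ <;>
          rw [hneg S hS (by omega)]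
        · rw [hlow _ (hins S hS).1 (by rw [(hins S hS).2]; omega), neg_zero]
        · exact (hsym _).1 (htop _ (hins S hS).1 (by rw [(hins S hS).2]; omega))
    have hle := ih Y (I.erase a) (by omega) hYlow hYtop
    have hdiv : #Y / 2 ^ t ≤ #X / 2 ^ (t + 1) := by
      rw [pow_succ', ← Nat.div_div_eq_div_mul]
      exact Nat.div_le_div_right hY
    have hmono : ∑ i ∈ range (#L + 1), (#Y / 2 ^ t - 2).choose i ≤
        ∑ i ∈ range (#L + 1), (#X / 2 ^ (t + 1) - 2).choose i :=
      sum_le_sum fun i _ => Nat.choose_le_choose i (Nat.sub_le_sub_right hdiv 2)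
    omega

lemma commonPart_eq_inf_orderEmbOfFin {m n : ℕ} (A : Fin m → Finset (Fin n)) (S : Finset (Fin m))
    {j : ℕ} (hj : #S = j) :
    commonPart A univ S = univ.inf fun t : Fin j => A (S.orderEmbOfFin hj t) := by
  have h : univ.inf (fun t : Fin j => A (S.orderEmbOfFin hj t)) = S.inf A := by
    conv_rhs => rw [← image_orderEmbOfFin_univ S hj, inf_image]
    rfl
  rw [h]
  ext x
  simp [commonPart, mem_inf]

/-- Generalized reverse odd-town theorem, case p ∣ n. -/
theorem generalized_reverse_odd_town_dvd (p : ℕ) (hp : p.Prime) (k : ℕ) (hk : 2 < k)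
    (L : Finset (ZMod p)) (h0 : (0 : ZMod p) ∉ L) (hsym : ∀ x : ZMod p, x ∈ L ↔ -x ∈ L)
    (n : ℕ) (hpn : p ∣ n)
    (m : ℕ) (hm : k ≤ m) (A : Fin m → Finset (Fin n)) (hA : Function.Injective A)
    (hlow : ∀ j : ℕ, 1 ≤ j → j ≤ k - 1 → ∀ r : Fin j → Fin m, StrictMono r →
      ((Finset.univ.inf fun t : Fin j => A (r t)).card : ZMod p) = 0)
    (htop : ∀ r : Fin k → Fin m, StrictMono r →
      ((Finset.univ.inf fun t : Fin k => A (r t)).card : ZMod p) ∈ L) :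
    m ≤ ∑ i ∈ Finset.range (L.card + 1), (n / 2 ^ (k - 2) - 2).choose i + (k - 2) := by
  have : Fact p.Prime := ⟨hp⟩
  obtain ⟨t, rfl⟩ : ∃ t, k = t + 2 := ⟨k - 2, by omega⟩
  have key := card_le_of_commonPart h0 hsym A t univ univ (by simpa using hm)
    (fun S _ hS => ?_) fun S _ hS => ?_
  · simpa using key
  · rcases Nat.eq_zero_or_pos #S with h | h
    · rw [card_eq_zero.1 h]
      simpa [commonPart] using (ZMod.natCast_eq_zero_iff n p).2 hpn
    · rw [commonPart_eq_inf_orderEmbOfFin A S rfl]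
      exact hlow #S h (by omega) _ (S.orderEmbOfFin rfl).strictMono
  · rw [commonPart_eq_inf_orderEmbOfFin A S hS]
    exact htop _ (S.orderEmbOfFin hS).strictMono
end

section
/- Let p be a prime, k > 2 an integer, and L ⊆ Z/pZ with 0 ∉ L and L = −L (i.e., x ∈ L iff −x ∈ L). Suppose p does not divide n. Let A_1, …, A_m be pairwise distinct subsets of [n] with m ≥ k such that: for every j with 1 ≤ j ≤ k−1 and all indices 1 ≤ r_1 < ⋯ < r_j ≤ m, |A_{r_1} ∩ ⋯ ∩ A_{r_j}| ≡ 0 (mod p); and for all indices 1 ≤ r_1 < ⋯ < r_k ≤ m, |A_{r_1} ∩ ⋯ ∩ A_{r_k}| mod p ∈ L. Then m ≤ ∑_{i=0}^{|L|} C(⌊n/2^{k−3}⌋ − 2, i) + (k − 2), where C(a,b) denotes the binomial coefficient and ⌊·⌋ denotes the floor (with the convention that a − 2 is truncated natural subtraction when a < 2). -/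
section ReverseOddTown

open Finset

variable {ι α R : Type*} [DecidableEq α]

/-- The `R`-valued indicator of the upper set of `T` in the lattice of finite sets. -/
def upperIndicator (R : Type*) [Semiring R] (T X : Finset α) : R := if T ⊆ X then 1 else 0

lemma prod_card_inter_sub_mem_span [CommRing R] (S B : Finset α) (hB : B ⊆ S) (L : Finset R) :
    (fun X : Finset α => ∏ l ∈ L, (((X ∩ B).card : R) - l)) ∈
      Submodule.span R (upperIndicator R '' {T | T ⊆ S ∧ T.card ≤ L.card}) := by
  classical
  induction L using Finset.induction_on with
  | empty =>
    refine Submodule.subset_span ⟨∅, by simp, ?_⟩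
    funext X
    simp [upperIndicator]
  | insert a L ha ih =>
    rw [card_insert_of_notMem ha]
    simp_rw [prod_insert ha]
    set W := Submodule.span R (upperIndicator R '' {T | T ⊆ S ∧ T.card ≤ L.card + 1})
    have hgen : ∀ T ⊆ S, T.card ≤ L.card + 1 → upperIndicator R T ∈ W := fun T hT hc =>
      Submodule.subset_span ⟨T, ⟨hT, hc⟩, rfl⟩
    have key : ∀ f ∈ Submodule.span R (upperIndicator R '' {T | T ⊆ S ∧ T.card ≤ L.card}),
        (fun X : Finset α => (((X ∩ B).card : R) - a) * f X) ∈ W := by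
      intro f hf
      induction hf using Submodule.span_induction with
      | mem f hf =>
        obtain ⟨T, ⟨hT, hc⟩, rfl⟩ := hf
        have hexp : (fun X : Finset α => (((X ∩ B).card : R) - a) * upperIndicator R T X) =
            ∑ b ∈ B, upperIndicator R (insert b T) - a • upperIndicator R T := by
          funext X
          simp only [Pi.sub_apply, Finset.sum_apply, Pi.smul_apply, smul_eq_mul, sub_mul]
          congr 1
          by_cases hTX : T ⊆ X
          · simp [upperIndicator, insert_subset_iff, hTX, inter_comm X B]
          · simp [upperIndicator, insert_subset_iff, hTX]
        rw [hexp]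
        refine W.sub_mem (W.sum_mem fun b hb => hgen _ (insert_subset (hB hb) hT) ?_)
          (W.smul_mem _ (hgen T hT (by omega)))
        exact (card_insert_le b T).trans (by omega)
      | zero =>
        simp only [Pi.zero_apply, mul_zero]
        exact W.zero_mem
      | add f g _ _ hf hg =>
        simp only [Pi.add_apply, mul_add]
        exact W.add_mem hf hg
      | smul c f _ hf =>
        convert W.smul_mem c hf using 1
        funext X
        simp only [Pi.smul_apply, smul_eq_mul]
        ring
    exact key _ ih

/-- Modular Frankl–Wilson bound: sizes vanish in the field, pairwise intersections lie in `L`. -/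
theorem card_le_sum_choose_of_card_inter_mem {F : Type*} [Field F] {L : Finset F}
    (h0 : (0 : F) ∉ L) (S : Finset α) (I : Finset ι) (A : ι → Finset α)
    (hcard : ∀ i ∈ I, ((S ∩ A i).card : F) = 0)
    (hinter : ∀ i ∈ I, ∀ j ∈ I, i ≠ j → ((S ∩ (A i ∩ A j)).card : F) ∈ L) :
    I.card ≤ ∑ i ∈ range (L.card + 1), S.card.choose i := by
  classical
  set G : Finset (Finset α → F) :=
    ((range (L.card + 1)).biUnion fun i => S.powersetCard i).image (upperIndicator F)
  let f : I → Finset α → F := fun i X => ∏ l ∈ L, (((X ∩ (S ∩ A i)).card : F) - l)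
  have hf : ∀ i, f i ∈ Submodule.span F (G : Set (Finset α → F)) := by
    intro i
    refine Submodule.span_mono ?_
      (prod_card_inter_sub_mem_span S (S ∩ A i) inter_subset_left L)
    rintro _ ⟨T, ⟨hT, hc⟩, rfl⟩
    refine mem_coe.2 (mem_image_of_mem _ (mem_biUnion.2 ⟨T.card, ?_, ?_⟩))
    · exact mem_range.2 (Nat.lt_succ_of_le hc)
    · exact mem_powersetCard.2 ⟨hT, rfl⟩
  have hdiag : ∀ i : I, f i (A i) ≠ 0 := by
    intro i
    refine prod_ne_zero_iff.2 fun l hl h => h0 ?_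
    rw [inter_left_comm, inter_self, hcard i i.2, zero_sub, neg_eq_zero] at h
    exact h ▸ hl
  have hoff : ∀ i j : I, i ≠ j → f i (A j) = 0 := by
    intro i j hij
    refine prod_eq_zero (hinter j j.2 i i.2 fun h => hij (Subtype.ext h.symm)) ?_
    rw [inter_left_comm, sub_self]
  have hli : LinearIndependent F f := by
    rw [Fintype.linearIndependent_iff]
    intro g hg j
    have h := congrFun hg (A j)
    simp only [Finset.sum_apply, Pi.smul_apply, smul_eq_mul, Pi.zero_apply] at h
    rw [Fintype.sum_eq_single j fun i hij => by rw [hoff i j hij, mul_zero]] at h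
    exact (mul_eq_zero.1 h).resolve_right (hdiag j)
  have hli' : LinearIndependent F
      (fun i => (⟨f i, hf i⟩ : Submodule.span F (G : Set (Finset α → F)))) :=
    LinearIndependent.of_comp (Submodule.subtype _) hli
  calc I.card = Fintype.card I := (Fintype.card_coe I).symm
    _ ≤ Module.finrank F (Submodule.span F (G : Set (Finset α → F))) :=
        hli'.fintype_card_le_finrank
    _ ≤ G.card := finrank_span_finset_le_card G
    _ ≤ _ := card_image_le
    _ ≤ _ := card_biUnion_le
    _ = _ := by simp_rw [card_powersetCard]

/-- Repeatedly intersecting with a member of the family or with its complement, whichever is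
smaller, reduces `(t + 2)`-wise intersection conditions to pairwise ones. -/
theorem exists_small_trace [Fintype α] [AddCommGroupWithOne R] {L : Finset R}
    (hsym : ∀ x : R, x ∈ L → -x ∈ L) (A : ι → Finset α) (t : ℕ) (S : Finset α)
    (I : Finset ι) (hI : t ≤ I.card)
    (hlow : ∀ J ⊆ I, 1 ≤ J.card → J.card ≤ t + 1 → ((S ∩ J.inf A).card : R) = 0)
    (htop : ∀ J ⊆ I, J.card = t + 2 → ((S ∩ J.inf A).card : R) ∈ L) :
    ∃ S' : Finset α, ∃ I' : Finset ι, 2 ^ t * S'.card ≤ S.card ∧ I'.card + t = I.card ∧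
      (∀ i ∈ I', ((S' ∩ A i).card : R) = 0) ∧
      ∀ i ∈ I', ∀ j ∈ I', i ≠ j → ((S' ∩ (A i ∩ A j)).card : R) ∈ L := by
  classical
  induction t generalizing S I with
  | zero =>
    refine ⟨S, I, by simp, by simp, fun i hi => ?_, fun i hi j hj hij => ?_⟩
    · simpa using hlow {i} (by simpa using hi) (by simp) (by simp)
    · simpa using htop {i, j} (by simp [insert_subset_iff, hi, hj]) (card_pair hij)
  | succ t ih =>
    obtain ⟨a, ha⟩ : I.Nonempty := card_pos.1 (by omega)
    have hcI : (I.erase a).card + 1 = I.card := card_erase_add_one ha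
    have hins : ∀ J ⊆ I.erase a, insert a J ⊆ I ∧ (insert a J).card = J.card + 1 ∧ J ⊆ I ∧
        (S ∩ A a) ∩ J.inf A = S ∩ (insert a J).inf A := by
      intro J hJ
      have hJI := hJ.trans (erase_subset a I)
      refine ⟨insert_subset ha hJI, card_insert_of_notMem fun h => ?_, hJI, ?_⟩
      · exact notMem_erase a I (hJ h)
      · rw [inf_insert, inf_eq_inter, inter_assoc]
    have hdiff : ∀ J : Finset ι, (((S \ A a) ∩ J.inf A).card : R) =
        ((S ∩ J.inf A).card : R) - (((S ∩ A a) ∩ J.inf A).card : R) := by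
      intro J
      rw [eq_sub_iff_add_eq, ← Nat.cast_add, ← card_union_of_disjoint, ← union_inter_distrib_right,
        sdiff_union_inter]
      exact (disjoint_sdiff_inter S (A a)).mono inter_subset_left inter_subset_left
    have hsum : (S \ A a).card + (S ∩ A a).card = S.card := card_sdiff_add_card_inter S (A a)
    have step : ∀ S₁ : Finset α, 2 * S₁.card ≤ S.card →
        (∀ J ⊆ I.erase a, 1 ≤ J.card → J.card ≤ t + 1 → ((S₁ ∩ J.inf A).card : R) = 0) →
        (∀ J ⊆ I.erase a, J.card = t + 2 → ((S₁ ∩ J.inf A).card : R) ∈ L) →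
        ∃ S' : Finset α, ∃ I' : Finset ι, 2 ^ (t + 1) * S'.card ≤ S.card ∧
          I'.card + (t + 1) = I.card ∧ (∀ i ∈ I', ((S' ∩ A i).card : R) = 0) ∧
          ∀ i ∈ I', ∀ j ∈ I', i ≠ j → ((S' ∩ (A i ∩ A j)).card : R) ∈ L := by
      intro S₁ hS₁ hl ht
      obtain ⟨S', I', h1, h2, h3⟩ := ih S₁ (I.erase a) (by omega) hl ht
      refine ⟨S', I', ?_, by omega, h3⟩
      rw [pow_succ']
      linarith
    have hlowA : ∀ J ⊆ I.erase a, 1 ≤ J.card → J.card ≤ t + 1 →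
        (((S ∩ A a) ∩ J.inf A).card : R) = 0 := by
      intro J hJ h1 h2
      obtain ⟨h3, h4, -, h6⟩ := hins J hJ
      rw [h6]
      exact hlow _ h3 (by omega) (by omega)
    have htopA : ∀ J ⊆ I.erase a, J.card = t + 2 →
        (((S ∩ A a) ∩ J.inf A).card : R) ∈ L := by
      intro J hJ h1
      obtain ⟨h3, h4, -, h6⟩ := hins J hJ
      rw [h6]
      exact htop _ h3 (by omega)
    rcases le_total (S ∩ A a).card (S \ A a).card with h | h
    · exact step _ (by omega) hlowA htopA
    · refine step (S \ A a) (by omega) (fun J hJ h1 h2 => ?_) fun J hJ h1 => ?_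
      · rw [hdiff, hlowA J hJ h1 h2, hlow J (hins J hJ).2.2.1 h1 (by omega), sub_zero]
      · rw [hdiff, hlow J (hins J hJ).2.2.1 (by omega) (by omega), zero_sub]
        exact hsym _ (htopA J hJ h1)

lemma two_le_card_of_card_inter_ne_zero [AddMonoidWithOne R] (S B C : Finset α)
    (hB : ((S ∩ B).card : R) = 0) (hBC : ((S ∩ (B ∩ C)).card : R) ≠ 0) : 2 ≤ S.card := by
  have hpos : 0 < (S ∩ (B ∩ C)).card := Nat.pos_of_ne_zero fun h => hBC (by simp [h])
  have hsub : S ∩ (B ∩ C) ⊆ S ∩ B := inter_subset_inter_left inter_subset_left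
  have hne : (S ∩ (B ∩ C)).card ≠ (S ∩ B).card := fun h => hBC (h ▸ hB)
  have h1 := card_le_card hsub
  have h2 : (S ∩ B).card ≤ S.card := card_le_card inter_subset_left
  omega

lemma inf_eq_univ_inf_orderEmbOfFin [Fintype α] {m j : ℕ} (A : Fin m → Finset α)
    (J : Finset (Fin m)) (hJ : J.card = j) :
    J.inf A = univ.inf fun t : Fin j => A (J.orderEmbOfFin hJ t) := by
  conv_lhs => rw [← image_orderEmbOfFin_univ J hJ]
  rw [inf_image]
  rfl

end ReverseOddTown

/-- Generalized reverse odd-town theorem, case p ∤ n. -/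
theorem generalized_reverse_odd_town_not_dvd (p : ℕ) (hp : p.Prime) (k : ℕ) (hk : 2 < k)
    (L : Finset (ZMod p)) (h0 : (0 : ZMod p) ∉ L) (hsym : ∀ x : ZMod p, x ∈ L ↔ -x ∈ L)
    (n : ℕ) (hpn : ¬ p ∣ n)
    (m : ℕ) (hm : k ≤ m) (A : Fin m → Finset (Fin n)) (hA : Function.Injective A)
    (hlow : ∀ j : ℕ, 1 ≤ j → j ≤ k - 1 → ∀ r : Fin j → Fin m, StrictMono r →
      ((Finset.univ.inf fun t : Fin j => A (r t)).card : ZMod p) = 0)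
    (htop : ∀ r : Fin k → Fin m, StrictMono r →
      ((Finset.univ.inf fun t : Fin k => A (r t)).card : ZMod p) ∈ L) :
    m ≤ ∑ i ∈ Finset.range (L.card + 1), (n / 2 ^ (k - 3) - 2).choose i + (k - 2) := by
  have : Fact p.Prime := ⟨hp⟩
  obtain ⟨t, rfl⟩ : ∃ t, k = t + 3 := ⟨k - 3, by omega⟩
  obtain ⟨S, I, hS, hI, hcard, hinter⟩ := exists_small_trace (fun x => (hsym x).1) A (t + 1)
    Finset.univ Finset.univ (by simp; omega)
    (fun J _ h1 h2 => by
      rw [Finset.univ_inter, inf_eq_univ_inf_orderEmbOfFin A J rfl]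
      exact hlow _ h1 (by omega) _ (J.orderEmbOfFin rfl).strictMono)
    (fun J _ h1 => by
      rw [Finset.univ_inter, inf_eq_univ_inf_orderEmbOfFin A J h1]
      exact htop _ (J.orderEmbOfFin h1).strictMono)
  rw [Finset.card_univ, Fintype.card_fin] at hS hI
  obtain ⟨i, hi, j, hj, hij⟩ := Finset.one_lt_card.1 (show 1 < I.card by omega)
  have hS2 : 2 ≤ S.card := two_le_card_of_card_inter_ne_zero S (A i) (A j) (hcard i hi)
    fun h => h0 (h ▸ hinter i hi j hj hij)
  have hdiv : S.card * 2 ≤ n / 2 ^ t := by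
    rw [Nat.le_div_iff_mul_le (by positivity)]
    calc S.card * 2 * 2 ^ t = 2 ^ (t + 1) * S.card := by ring
      _ ≤ n := hS
  have hbound := card_le_sum_choose_of_card_inter_mem h0 S I A hcard hinter
  have hmono : ∑ i ∈ Finset.range (L.card + 1), S.card.choose i ≤
      ∑ i ∈ Finset.range (L.card + 1), (n / 2 ^ (t + 3 - 3) - 2).choose i :=
    Finset.sum_le_sum fun i _ => Nat.choose_le_choose i (by rw [Nat.add_sub_cancel]; omega)
  omega
end
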